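/- For each k ≥ 1 and |q| < 1: Σ_{λ: l(λ) ≤ k} q^{n_2(λ)} / ((-q;q)_{λ_k} (q;q)_λ) = (q^{2k+2}, q^{k+1}, q^{k+1}; q^{2k+2})_∞ / (q;q)_∞. -/

import Mathlib

/-- Finite q-Pochhammer symbol `(x;q)_n = ∏_{k=0}^{n-1} (1 - x q^k)`. -/
noncomputable def qPoch (x q : ℂ) (n : ℕ) : ℂ := ∏ k ∈ Finset.range n, (1 - x * q ^ k)

/-- Infinite q-Pochhammer symbol `(x;q)_∞ = ∏_{k≥0} (1 - x q^k)`. -/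
noncomputable def qPochInf (x q : ℂ) : ℂ := ∏' k : ℕ, (1 - x * q ^ k)

/-- Partitions with at most `k` (positive) parts: antitone sequences of naturals vanishing
from index `k` on; `l 0` is the largest part `λ_1`, and `l (k-1)` is `λ_k`. -/
def PartK (k : ℕ) : Type := {l : ℕ → ℕ // Antitone l ∧ ∀ i, k ≤ i → l i = 0}

/-- `|λ| = Σ_i λ_i`. -/
def wtK (k : ℕ) (l : PartK k) : ℕ := ∑ i ∈ Finset.range k, l.1 i

/-- `n_2(λ) = Σ_i λ_i^2`. -/
def n2K (k : ℕ) (l : PartK k) : ℕ := ∑ i ∈ Finset.range k, (l.1 i) ^ 2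

/-- `n(λ) = Σ_i binom(λ_i, 2)`. -/
def nK (k : ℕ) (l : PartK k) : ℕ := ∑ i ∈ Finset.range k, Nat.choose (l.1 i) 2

/-- `(x;q)_λ = ∏_{i=1}^{k} (x;q)_{λ_i - λ_{i+1}}` (with `λ_{k+1} = 0`). -/
noncomputable def pochK (x q : ℂ) (k : ℕ) (l : PartK k) : ℂ :=
  ∏ i ∈ Finset.range k, qPoch x q (l.1 i - l.1 (i + 1))

/-! ### Finite algebra -/

lemma qPoch_succ (x q : ℂ) (n : ℕ) : qPoch x q (n + 1) = qPoch x q n * (1 - x * q ^ n) := by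
  simp [qPoch, Finset.prod_range_succ]

lemma qPoch_zero (x q : ℂ) : qPoch x q 0 = 1 := by simp [qPoch]

lemma one_sub_ne {x q : ℂ} (hx : ‖x‖ < 1) (hq : ‖q‖ < 1) (n : ℕ) : 1 - x * q ^ n ≠ 0 := by
  intro h
  have h1 : x * q ^ n = 1 := (sub_eq_zero.mp h).symm
  have h2 : ‖x * q ^ n‖ < 1 := by
    rw [norm_mul, norm_pow]
    calc ‖x‖ * ‖q‖ ^ n ≤ ‖x‖ * 1 := by
          gcongr
          exact pow_le_one₀ (norm_nonneg _) hq.le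
      _ < 1 := by simpa using hx
  rw [h1] at h2
  simp at h2

lemma qPoch_ne {x q : ℂ} (hx : ‖x‖ < 1) (hq : ‖q‖ < 1) (n : ℕ) : qPoch x q n ≠ 0 :=
  Finset.prod_ne_zero_iff.mpr fun k _ => one_sub_ne hx hq k

/-- Reciprocal of `(q;q)_n`. -/
noncomputable def rrU (q : ℂ) (n : ℕ) : ℂ := (qPoch q q n)⁻¹

lemma rrU_zero (q : ℂ) : rrU q 0 = 1 := by simp [rrU, qPoch_zero]

lemma rrU_succ {q : ℂ} (hq : ‖q‖ < 1) (n : ℕ) :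
    rrU q n = (1 - q ^ (n + 1)) * rrU q (n + 1) := by
  have h1 := qPoch_ne hq hq n
  have h2 := one_sub_ne hq hq n
  rw [rrU, rrU, qPoch_succ]
  rw [pow_succ']
  field_simp

/-- q-binomial coefficients by Pascal's rule. -/
noncomputable def rrBin (q : ℂ) : ℕ → ℕ → ℂ
  | _, 0 => 1
  | 0, _ + 1 => 0
  | M + 1, s + 1 => rrBin q M s + q ^ (s + 1) * rrBin q M (s + 1)

lemma rrBin_gt (q : ℂ) (M : ℕ) : ∀ s, M < s → rrBin q M s = 0 := by
  induction M with
  | zero => intro s hs; obtain ⟨t, rfl⟩ := Nat.exists_eq_add_of_lt hs; simp [rrBin]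
  | succ M ih =>
    intro s hs
    obtain ⟨t, rfl⟩ : ∃ t, s = t + 1 := ⟨s - 1, by omega⟩
    rw [rrBin, ih t (by omega), ih (t + 1) (by omega)]; simp

lemma rrBin_self (q : ℂ) (M : ℕ) : rrBin q M M = 1 := by
  induction M with
  | zero => simp [rrBin]
  | succ M ih => rw [rrBin, ih, rrBin_gt q M (M + 1) (by omega)]; simp

lemma rrBin_zero (q : ℂ) (M : ℕ) : rrBin q M 0 = 1 := by
  cases M <;> simp [rrBin]

lemma rrBin_eq (q : ℂ) (N : ℕ) : ∀ s t, s + t = N →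
    qPoch q q s * qPoch q q t * rrBin q N s = qPoch q q N := by
  induction N with
  | zero =>
    intro s t h
    obtain ⟨rfl, rfl⟩ : s = 0 ∧ t = 0 := by omega
    simp [qPoch_zero, rrBin]
  | succ N ih =>
    intro s t h
    rcases s with _ | s
    · obtain rfl : t = N + 1 := by omega
      simp [rrBin_zero, qPoch_zero]
    rcases t with _ | t
    · obtain rfl : s = N := by omega
      simp [rrBin_self, qPoch_zero]
    have h1 := ih s (t + 1) (by omega)
    have h2 := ih (s + 1) t (by omega)
    rw [rrBin]
    have e : q ^ N = q ^ (s + 1) * q ^ t := by rw [← pow_add]; congr 1; omega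
    rw [qPoch_succ q q N, e]
    rw [qPoch_succ] at h1 h2 ⊢
    rw [qPoch_succ]
    have e2 : q ^ (s + 1) = q * q ^ s := pow_succ' q s
    rw [e2] at *
    linear_combination (1 - q * q ^ s) * h1 + (q * q ^ s) * (1 - q * q ^ t) * h2

lemma rrBin_u {q : ℂ} (hq : ‖q‖ < 1) (s t : ℕ) :
    rrU q s * rrU q t = rrU q (s + t) * rrBin q (s + t) s := by
  have h := rrBin_eq q (s + t) s t rfl
  have h1 := qPoch_ne hq hq s
  have h2 := qPoch_ne hq hq t
  have h3 := qPoch_ne hq hq (s + t)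
  simp only [rrU]
  field_simp
  linear_combination -h

lemma vand {q : ℂ} (hq : ‖q‖ < 1) (M : ℕ) : ∀ c,
    ∑ s ∈ Finset.range (M + 1), q ^ (s * (s + c)) * rrBin q M s * rrU q (s + c)
      = rrU q (M + c) := by
  induction M with
  | zero => intro c; simp [rrBin]
  | succ M ih =>
    intro c
    rw [show M + 1 + c = M + (c + 1) by ring, ← ih (c + 1)]
    have split : ∀ s, q ^ ((s + 1) * (s + 1 + c)) * rrBin q (M + 1) (s + 1) * rrU q (s + 1 + c) =
        q ^ ((s + 1) * (s + 1 + c)) * rrBin q M s * rrU q (s + 1 + c) +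
        q ^ ((s + 1) * (s + 1 + c)) * (q ^ (s + 1) * rrBin q M (s + 1)) * rrU q (s + 1 + c) := by
      intro s
      rw [rrBin]
      ring
    rw [Finset.sum_range_succ']
    simp only [split, Finset.sum_add_distrib]
    have key : ∑ s ∈ Finset.range (M + 1), q ^ ((s + 1) * (s + 1 + c)) *
          (q ^ (s + 1) * rrBin q M (s + 1)) * rrU q (s + 1 + c) +
        q ^ (0 * (0 + c)) * rrBin q (M + 1) 0 * rrU q (0 + c) =
        ∑ s ∈ Finset.range (M + 1), q ^ (s * (s + c + 1)) * rrBin q M s * rrU q (s + c) := by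
      rw [Finset.sum_range_succ, rrBin_gt q M (M + 1) (by omega), Finset.sum_range_succ']
      simp only [rrBin_zero]
      simp only [zero_mul, mul_zero, add_zero]
      congr 1
      apply Finset.sum_congr rfl
      intro s _
      ring
    rw [add_assoc, key, ← Finset.sum_add_distrib]
    apply Finset.sum_congr rfl
    intro s _
    rw [rrU_succ hq (s + c), show s + 1 + c = s + c + 1 by ring, show s + (c + 1) = s + c + 1 by ring]
    ring

lemma vand' {q : ℂ} (hq : ‖q‖ < 1) (M c : ℕ) :
    ∑ s ∈ Finset.range (M + 1), q ^ (s * (s + c)) * rrU q (M - s) * rrU q s * rrU q (s + c)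
      = rrU q M * rrU q (M + c) := by
  rw [← vand hq M c, Finset.mul_sum]
  apply Finset.sum_congr rfl
  intro s hs
  have hs' : s ≤ M := by simpa [Nat.lt_succ_iff] using hs
  have := rrBin_u hq s (M - s)
  rw [Nat.add_sub_cancel' hs'] at this
  linear_combination q ^ (s * (s + c)) * rrU q (s + c) * this

/-- Coefficients of the theta series. -/
noncomputable def rrA (n : ℕ) : ℂ := if n = 0 then 1 else 2 * (-1) ^ n

noncomputable def rrB (q : ℂ) (j L : ℕ) : ℂ :=
  ∑ n ∈ Finset.range (L + 1), rrA n * q ^ (j * n ^ 2) * rrU q (L - n) * rrU q (L + n)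

lemma bailey_step {q : ℂ} (hq : ‖q‖ < 1) (j L : ℕ) :
    ∑ r ∈ Finset.range (L + 1), q ^ (r ^ 2) * rrB q j r * rrU q (L - r) = rrB q (j + 1) L := by
  simp only [rrB, Finset.mul_sum, Finset.sum_mul]
  rw [Finset.sum_comm' (t' := Finset.range (L + 1)) (s' := fun n => Finset.Ico n (L + 1))
    (by intro x y; simp only [Finset.mem_range, Finset.mem_Ico]; omega)]
  apply Finset.sum_congr rfl
  intro n hn
  have hn' : n ≤ L := by simpa [Nat.lt_succ_iff] using hn
  obtain ⟨M, rfl⟩ := Nat.exists_eq_add_of_le hn'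
  rw [Finset.sum_Ico_eq_sum_range]
  have h := vand' hq M (2 * n)
  rw [show n + M + 1 - n = M + 1 by omega, show n + M - n = M by omega,
    show n + M + n = M + 2 * n by ring, mul_assoc, ← h, Finset.mul_sum]
  apply Finset.sum_congr rfl
  intro s _
  rw [show n + M - (n + s) = M - s by omega, show n + s - n = s by omega,
    show n + s + n = s + 2 * n by ring]
  ring

lemma gauss_rec (p : ℂ) (u : ℕ → ℂ) (hu : ∀ n, u n = (1 - p ^ (n + 1)) * u (n + 1)) (m : ℕ) :
    (1 - p ^ (m + 2)) * ∑ x ∈ Finset.HasAntidiagonal.antidiagonal (m + 2), (-1) ^ x.1 * u x.1 * u x.2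
      = ∑ x ∈ Finset.HasAntidiagonal.antidiagonal m, (-1) ^ x.1 * u x.1 * u x.2 := by
  have key : ∀ m, ∑ x ∈ Finset.HasAntidiagonal.antidiagonal (m + 1), (-1) ^ x.1 * (1 - p ^ x.1) * u x.1 * u x.2
      = - ∑ x ∈ Finset.HasAntidiagonal.antidiagonal m, (-1) ^ x.1 * u x.1 * u x.2 := by
    intro m
    rw [Finset.Nat.sum_antidiagonal_succ, ← Finset.sum_neg_distrib]
    simp only [pow_zero, sub_self, mul_zero, zero_mul, zero_add]
    apply Finset.sum_congr rfl
    intro x _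
    rw [hu x.1]; ring
  have key2 : ∀ m, ∑ x ∈ Finset.HasAntidiagonal.antidiagonal (m + 1),
        (-1) ^ x.1 * (p ^ x.1 * (1 - p ^ x.2)) * u x.1 * u x.2
      = ∑ x ∈ Finset.HasAntidiagonal.antidiagonal m, (-1) ^ x.1 * p ^ x.1 * u x.1 * u x.2 := by
    intro m
    rw [Finset.Nat.sum_antidiagonal_succ']
    simp only [pow_zero, sub_self, mul_zero, zero_mul, zero_add]
    apply Finset.sum_congr rfl
    intro x _
    rw [hu x.2]; ring
  have e1 : (1 - p ^ (m + 2)) * ∑ x ∈ Finset.HasAntidiagonal.antidiagonal (m + 2), (-1) ^ x.1 * u x.1 * u x.2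
      = ∑ x ∈ Finset.HasAntidiagonal.antidiagonal (m + 2), (-1) ^ x.1 * (1 - p ^ x.1) * u x.1 * u x.2 +
        ∑ x ∈ Finset.HasAntidiagonal.antidiagonal (m + 2),
          (-1) ^ x.1 * (p ^ x.1 * (1 - p ^ x.2)) * u x.1 * u x.2 := by
    rw [Finset.mul_sum, ← Finset.sum_add_distrib]
    apply Finset.sum_congr rfl
    intro x hx
    rw [← Finset.HasAntidiagonal.mem_antidiagonal.mp hx, pow_add]
    ring
  have e2 : ∑ x ∈ Finset.HasAntidiagonal.antidiagonal (m + 1), (-1) ^ x.1 * p ^ x.1 * u x.1 * u x.2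
      = ∑ x ∈ Finset.HasAntidiagonal.antidiagonal (m + 1), (-1) ^ x.1 * u x.1 * u x.2 -
        ∑ x ∈ Finset.HasAntidiagonal.antidiagonal (m + 1), (-1) ^ x.1 * (1 - p ^ x.1) * u x.1 * u x.2 := by
    rw [← Finset.sum_sub_distrib]
    apply Finset.sum_congr rfl
    intro x hx
    ring
  rw [e1, key, key2, e2, key]
  ring

lemma tri_two (n : ℕ) : 2 * (n + 1).choose 2 = n * (n + 1) := by
  induction n with
  | zero => simp
  | succ n ih =>
    rw [Nat.choose_succ_succ' (n + 1) 1, Nat.choose_one_right]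
    nlinarith

lemma tri_exp (L n : ℕ) (h : n ≤ L) :
    (L - n + 1).choose 2 + (L + n + 1).choose 2 = L * (L + 1) + n ^ 2 := by
  obtain ⟨M, rfl⟩ := Nat.exists_eq_add_of_le h
  rw [show n + M - n = M by omega]
  have h1 := tri_two M
  have h2 := tri_two (n + M + n)
  nlinarith

lemma fold_sum (g : ℕ → ℂ) (L : ℕ) (hg : ∀ n, n ≤ L → g (L - n) = g (L + n)) :
    ∑ i ∈ Finset.range (2 * L + 1), g i
      = ∑ n ∈ Finset.range (L + 1), (if n = 0 then 1 else 2) * g (L + n) := by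
  rw [show 2 * L + 1 = L + (L + 1) by ring, Finset.sum_range_add, ← Finset.sum_range_reflect,
    Finset.sum_range_succ' (fun x => g (L + x)), Finset.sum_range_succ' (fun n => _ * g (L + n)),
    ← add_assoc, ← Finset.sum_add_distrib]
  congr 1
  · apply Finset.sum_congr rfl
    intro n hn
    have hn' := Finset.mem_range.mp hn
    rw [show L - 1 - n = L - (n + 1) by omega, hg (n + 1) (by omega)]
    simp; ring
  · simp

lemma rrB_one {q : ℂ} (hq : ‖q‖ < 1) (L : ℕ) :
    rrB q 1 L = rrU q L * (qPoch (-q) q L)⁻¹ := by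
  by_cases h0 : q = 0
  · subst h0
    have h1 : ∀ n, qPoch 0 0 n = 1 := by intro n; simp [qPoch]
    rw [rrB, Finset.sum_range_succ']
    simp [rrU, h1, rrA]
  have hu : ∀ n, (fun n => (-1) ^ n * q ^ ((n + 1).choose 2) * rrU q n) n = (1 - q⁻¹ ^ (n + 1)) *
      (fun n => (-1) ^ n * q ^ ((n + 1).choose 2) * rrU q n) (n + 1) := by
    intro n
    simp only
    rw [rrU_succ hq n, Nat.choose_succ_succ' (n + 1) 1, Nat.choose_one_right, pow_add q (n + 1)]
    rw [inv_pow]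
    have : q ^ (n + 1) ≠ 0 := pow_ne_zero _ h0
    generalize q ^ (n + 1) = y at *
    field_simp
    ring
  have hG : ∀ L, ∑ x ∈ Finset.HasAntidiagonal.antidiagonal (2 * L), (-1) ^ x.1 *
      (fun n => (-1) ^ n * q ^ ((n + 1).choose 2) * rrU q n) x.1 *
      (fun n => (-1) ^ n * q ^ ((n + 1).choose 2) * rrU q n) x.2
      = (-1) ^ L * q ^ (L * (L + 1)) * rrB q 1 L := by
    intro L
    rw [Finset.Nat.sum_antidiagonal_eq_sum_range_succ_mk]
    have key : ∀ n, n ≤ L → ∀ i j, (i = L - n ∧ j = L + n) ∨ (i = L + n ∧ j = L - n) →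
        (-1 : ℂ) ^ i * ((-1) ^ i * q ^ ((i + 1).choose 2) * rrU q i) *
          ((-1) ^ j * q ^ ((j + 1).choose 2) * rrU q j) =
        (-1) ^ L * q ^ (L * (L + 1)) *
          ((-1) ^ n * q ^ (1 * n ^ 2) * rrU q (L - n) * rrU q (L + n)) := by
      intro n hn i j hij
      have s1 : (-1 : ℂ) ^ i * (-1) ^ i = 1 := by rw [← mul_pow]; simp
      have s2 : (-1 : ℂ) ^ j = (-1) ^ L * (-1) ^ n := by
        rcases hij with ⟨_, h⟩ | ⟨_, h⟩
        · rw [h, pow_add]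
        · rw [h]
          have : (-1 : ℂ) ^ L = (-1) ^ (L - n) * (-1) ^ n := by
            rw [← pow_add, Nat.sub_add_cancel hn]
          rw [this, mul_assoc, ← mul_pow]; simp
      have s3 : q ^ ((i + 1).choose 2) * q ^ ((j + 1).choose 2) =
          q ^ (L * (L + 1)) * q ^ (1 * n ^ 2) := by
        rw [← pow_add, ← pow_add, one_mul, ← tri_exp L n hn]
        rcases hij with ⟨rfl, rfl⟩ | ⟨rfl, rfl⟩
        · rfl
        · rw [add_comm]
      have s4 : rrU q i * rrU q j = rrU q (L - n) * rrU q (L + n) := by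
        rcases hij with ⟨rfl, rfl⟩ | ⟨rfl, rfl⟩
        · rfl
        · rw [mul_comm]
      calc _ = ((-1 : ℂ) ^ i * (-1) ^ i) * (-1) ^ j *
            (q ^ ((i + 1).choose 2) * q ^ ((j + 1).choose 2)) * (rrU q i * rrU q j) := by ring
        _ = _ := by rw [s1, s2, s3, s4]; ring
    rw [fold_sum _ L]
    · rw [rrB, Finset.mul_sum]
      apply Finset.sum_congr rfl
      intro n hn
      have hn' : n ≤ L := by simpa [Nat.lt_succ_iff] using hn
      simp only
      rw [key n hn' (L + n) (2 * L - (L + n)) (Or.inr ⟨rfl, by omega⟩), rrA]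
      split_ifs with h
      · subst h; simp
      · ring
    · intro n hn
      simp only
      rw [key n hn (L + n) (2 * L - (L + n)) (Or.inr ⟨rfl, by omega⟩),
        key n hn (L - n) (2 * L - (L - n)) (Or.inl ⟨rfl, by omega⟩)]
  have hrec : ∀ L, (1 - q ^ (2 * L + 2)) * rrB q 1 (L + 1) = rrB q 1 L := by
    intro L
    have h := gauss_rec q⁻¹ _ hu (2 * L)
    rw [hG L, show 2 * L + 2 = 2 * (L + 1) by ring, hG (L + 1)] at h
    rw [show (L + 1) * (L + 1 + 1) = L * (L + 1) + 2 * (L + 1) by ring, pow_add q, inv_pow,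
      pow_succ (-1 : ℂ) L] at h
    have a1 : q ^ (2 * (L + 1)) ≠ 0 := pow_ne_zero _ h0
    have a2 : (-1 : ℂ) ^ L * q ^ (L * (L + 1)) ≠ 0 :=
      mul_ne_zero (pow_ne_zero _ (by norm_num)) (pow_ne_zero _ h0)
    apply mul_left_cancel₀ a2
    rw [← h, show 2 * L + 2 = 2 * (L + 1) by ring]
    generalize q ^ (2 * (L + 1)) = y at *
    field_simp
    ring
  induction L with
  | zero => simp [rrB, rrU_zero, qPoch_zero, rrA]
  | succ L ih =>
    have h := hrec L
    rw [ih, rrU_succ hq L] at h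
    have hq' : ‖-q‖ < 1 := by simpa using hq
    have b1 := qPoch_ne hq' hq L
    have b2 := one_sub_ne hq' hq L
    have b3 := one_sub_ne hq hq L
    rw [show q ^ (2 * L + 2) = (q * q ^ L) ^ 2 by ring, show q ^ (L + 1) = q * q ^ L by ring] at h
    rw [qPoch_succ]
    have b4 : (1 - (q * q ^ L) ^ 2) ≠ 0 := by
      have := mul_ne_zero b2 b3
      intro h; apply this; linear_combination h
    apply mul_left_cancel₀ b4
    rw [h]
    rw [neg_mul, sub_neg_eq_add] at b2 ⊢
    generalize q * q ^ L = y at *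
    field_simp
    ring

/-! ### Limits -/

open Filter Topology in
lemma qPoch_tendsto (x : ℂ) {q : ℂ} (hq : ‖q‖ < 1) :
    Tendsto (fun n => qPoch x q n) atTop (𝓝 (qPochInf x q)) := by
  have hs : Summable fun n : ℕ => ‖-(x * q ^ n)‖ := by
    simp only [norm_neg, norm_mul, norm_pow]
    exact (summable_geometric_of_lt_one (norm_nonneg _) hq).mul_left _
  have := (multipliable_one_add_of_summable hs).tendsto_prod_tprod_nat
  simpa [qPoch, qPochInf, sub_eq_add_neg] using this

lemma qPochInf_ne {x q : ℂ} (hx : ‖x‖ < 1) (hq : ‖q‖ < 1) : qPochInf x q ≠ 0 := by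
  have hs : Summable fun n : ℕ => ‖-(x * q ^ n)‖ := by
    simp only [norm_neg, norm_mul, norm_pow]
    exact (summable_geometric_of_lt_one (norm_nonneg _) hq).mul_left _
  have := tprod_one_add_ne_zero_of_summable (f := fun n : ℕ => -(x * q ^ n))
    (fun n => by simpa [sub_eq_add_neg] using one_sub_ne hx hq n) hs
  simpa [qPochInf, sub_eq_add_neg] using this

open Filter Topology in
lemma bdd_of_tendsto {f : ℕ → ℂ} {a : ℂ} (h : Tendsto f atTop (𝓝 a)) :
    ∃ C : ℝ, 0 ≤ C ∧ ∀ n, ‖f n‖ ≤ C := by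
  obtain ⟨C, hC⟩ := h.norm.bddAbove_range
  have h1 : ∀ n, ‖f n‖ ≤ C := fun n => hC ⟨n, rfl⟩
  exact ⟨C, (norm_nonneg _).trans (h1 0), h1⟩

open Filter Topology in
lemma rrU_tendsto {q : ℂ} (hq : ‖q‖ < 1) :
    Tendsto (fun n => rrU q n) atTop (𝓝 (qPochInf q q)⁻¹) :=
  (qPoch_tendsto q hq).inv₀ (qPochInf_ne hq hq)

noncomputable def rrTheta (y : ℂ) : ℂ := ∑' n : ℕ, rrA n * y ^ (n ^ 2)

lemma rrA_norm (n : ℕ) : ‖rrA n‖ ≤ 2 := by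
  rw [rrA]; split_ifs <;> simp

lemma pow_sq_le {r : ℝ} (h0 : 0 ≤ r) (h1 : r < 1) (n : ℕ) : r ^ (n ^ 2) ≤ r ^ n :=
  pow_le_pow_of_le_one h0 h1.le (by nlinarith [Nat.le_self_pow (two_ne_zero) n])

open Filter Topology in
lemma rrB_tendsto {q : ℂ} (hq : ‖q‖ < 1) (j : ℕ) (hj : 1 ≤ j) :
    Tendsto (fun L => rrB q j L) atTop
      (𝓝 (rrTheta (q ^ j) * ((qPochInf q q)⁻¹ * (qPochInf q q)⁻¹))) := by
  obtain ⟨C, hC0, hC⟩ := bdd_of_tendsto (rrU_tendsto hq)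
  have e : ∀ L, rrB q j L = ∑' n : ℕ, if n ∈ Finset.range (L + 1) then
      rrA n * q ^ (j * n ^ 2) * rrU q (L - n) * rrU q (L + n) else 0 := by
    intro L
    rw [rrB, tsum_eq_sum (s := Finset.range (L + 1)) (by intro b hb; simp only [hb, if_false])]
    exact Finset.sum_congr rfl fun n hn => by simp only [hn, if_true]
  simp only [e]
  rw [rrTheta, ← tsum_mul_right]
  refine tendsto_tsum_of_dominated_convergence (bound := fun n => 2 * ‖q‖ ^ n * C * C) ?_ ?_ ?_
  · exact (((summable_geometric_of_lt_one (norm_nonneg _) hq).mul_left 2).mul_right C).mul_right C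
  · intro n
    have h1 : Tendsto (fun L => rrU q (L - n)) atTop (𝓝 (qPochInf q q)⁻¹) :=
      (rrU_tendsto hq).comp (tendsto_sub_atTop_nat n)
    have h2 : Tendsto (fun L => rrU q (L + n)) atTop (𝓝 (qPochInf q q)⁻¹) :=
      (rrU_tendsto hq).comp (tendsto_add_atTop_nat n)
    refine ((h1.mul h2).const_mul (rrA n * (q ^ j) ^ (n ^ 2))).congr' ?_
    filter_upwards [eventually_ge_atTop n] with L hL
    rw [if_pos (by simp; omega), pow_mul]
    ring
  · refine Eventually.of_forall fun L n => ?_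
    split_ifs
    · rw [norm_mul, norm_mul, norm_mul]
      have : ‖q ^ (j * n ^ 2)‖ ≤ ‖q‖ ^ n := by
        rw [norm_pow]
        exact pow_le_pow_of_le_one (norm_nonneg _) hq.le
          ((Nat.le_self_pow two_ne_zero n).trans (Nat.le_mul_of_pos_left _ hj))
      gcongr
      · exact rrA_norm n
      · exact hC _
      · exact hC _
    · rw [norm_zero]; positivity

lemma theta_eq {q : ℂ} (hq : ‖q‖ < 1) :
    rrTheta q = qPochInf (q ^ 2) (q ^ 2) * qPochInf q (q ^ 2) * qPochInf q (q ^ 2) := by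
  have hq' : ‖-q‖ < 1 := by simpa using hq
  have hq2 : ‖q ^ 2‖ < 1 := by rw [norm_pow]; exact pow_lt_one₀ (norm_nonneg _) hq two_ne_zero
  have n1 := qPochInf_ne hq hq
  have n2 := qPochInf_ne hq' hq
  have h1 := rrB_tendsto hq 1 le_rfl
  have h2 := (rrU_tendsto hq).mul ((qPoch_tendsto (-q) hq).inv₀ n2)
  simp only [rrB_one hq] at h1
  have h3 := tendsto_nhds_unique h1 h2
  have h4 : qPochInf q q * qPochInf (-q) q = qPochInf (q ^ 2) (q ^ 2) := by
    refine tendsto_nhds_unique ((qPoch_tendsto q hq).mul (qPoch_tendsto (-q) hq)) ?_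
    refine (qPoch_tendsto (q ^ 2) hq2).congr fun n => ?_
    simp only [qPoch, ← Finset.prod_mul_distrib]
    exact Finset.prod_congr rfl fun k _ => by ring
  have h5 : qPochInf q q = qPochInf q (q ^ 2) * qPochInf (q ^ 2) (q ^ 2) := by
    refine tendsto_nhds_unique ((qPoch_tendsto q hq).comp
      (Filter.tendsto_id.const_mul_atTop' (two_pos : 0 < 2)))
      (((qPoch_tendsto q hq2).mul (qPoch_tendsto (q ^ 2) hq2)).congr fun n => ?_)
    simp only [Function.comp, id]
    induction n with
    | zero => simp [qPoch_zero]
    | succ n ih =>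
      rw [show 2 * (n + 1) = 2 * n + 1 + 1 by ring]
      simp only [qPoch_succ]
      rw [← ih]
      ring
  rw [pow_one] at h3
  have n3 := qPochInf_ne hq2 hq2
  have h6 : rrTheta q * qPochInf (-q) q = qPochInf q q := by
    field_simp at h3
    linear_combination h3
  apply mul_right_cancel₀ n2
  rw [h6]
  have : qPochInf q (q ^ 2) * qPochInf (-q) q = 1 := by
    apply mul_right_cancel₀ n3
    linear_combination h4 - qPochInf (-q) q * h5
  linear_combination h5 - qPochInf q (q ^ 2) * qPochInf (q ^ 2) (q ^ 2) * this

open Filter Topology in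
/-- The limiting case of the Bailey lemma. -/
lemma bailey_lim {q : ℂ} (hq : ‖q‖ < 1) (j : ℕ) (hj : 1 ≤ j) :
    ∑' r : ℕ, q ^ (r ^ 2) * rrB q j r = rrTheta (q ^ (j + 1)) / qPochInf q q := by
  obtain ⟨C, hC0, hC⟩ := bdd_of_tendsto (rrU_tendsto hq)
  obtain ⟨D, hD0, hD⟩ := bdd_of_tendsto (rrB_tendsto hq j hj)
  have n1 := qPochInf_ne hq hq
  have h1 := rrB_tendsto hq (j + 1) (by omega)
  have h2 : Tendsto (fun L => rrB q (j + 1) L) atTop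
      (𝓝 (∑' r : ℕ, q ^ (r ^ 2) * rrB q j r * (qPochInf q q)⁻¹)) := by
    have e : ∀ L, rrB q (j + 1) L = ∑' r : ℕ, if r ∈ Finset.range (L + 1) then
        q ^ (r ^ 2) * rrB q j r * rrU q (L - r) else 0 := by
      intro L
      rw [← bailey_step hq,
        tsum_eq_sum (s := Finset.range (L + 1)) (by intro b hb; simp only [hb, if_false])]
      exact Finset.sum_congr rfl fun n hn => by simp only [hn, if_true]
    simp only [e]
    refine tendsto_tsum_of_dominated_convergence (bound := fun n => ‖q‖ ^ n * D * C) ?_ ?_ ?_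
    · exact ((summable_geometric_of_lt_one (norm_nonneg _) hq).mul_right D).mul_right C
    · intro n
      have h1 : Tendsto (fun L => rrU q (L - n)) atTop (𝓝 (qPochInf q q)⁻¹) :=
        (rrU_tendsto hq).comp (tendsto_sub_atTop_nat n)
      refine (h1.const_mul _).congr' ?_
      filter_upwards [eventually_ge_atTop n] with L hL
      rw [if_pos (by simp; omega)]
    · refine Eventually.of_forall fun L n => ?_
      split_ifs
      · rw [norm_mul, norm_mul]
        have : ‖q ^ (n ^ 2)‖ ≤ ‖q‖ ^ n := by
          rw [norm_pow]
          exact pow_sq_le (norm_nonneg _) hq n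
        gcongr
        · exact hD _
        · exact hC _
      · rw [norm_zero]; positivity
  have h3 := tendsto_nhds_unique h1 h2
  rw [tsum_mul_right] at h3
  apply mul_right_cancel₀ (inv_ne_zero n1)
  rw [← h3]
  ring

/-! ### Sums over partitions -/

/-- Remove the largest part. -/
def rrShift (k : ℕ) (l : PartK (k + 1)) : PartK k :=
  ⟨fun i => l.1 (i + 1), fun _ _ h => l.2.1 (Nat.succ_le_succ h),
    fun i hi => l.2.2 (i + 1) (by omega)⟩

def rrSplit (k : ℕ) (l : PartK (k + 1)) : ℕ × PartK k := (l.1 0, rrShift k l)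

lemma rrSplit_inj (k : ℕ) : Function.Injective (rrSplit k) := by
  intro l m h
  apply Subtype.ext
  funext i
  rcases i with _ | i
  · exact congrArg Prod.fst h
  · exact congrFun (congrArg (fun x => x.2.1) h) i

lemma rrSplit_range (k : ℕ) (L : ℕ) (m : PartK k) (h : m.1 0 ≤ L) :
    (L, m) ∈ Set.range (rrSplit k) := by
  refine ⟨⟨fun i => Nat.casesOn i L m.1, ?_, ?_⟩, ?_⟩
  · apply antitone_nat_of_succ_le
    intro n
    rcases n with _ | n
    · exact h
    · exact m.2.1 (Nat.le_succ n)
  · intro i hi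
    rcases i with _ | i
    · omega
    · exact m.2.2 i (by omega)
  · rfl

lemma summable_wt {r : ℝ} (h0 : 0 ≤ r) (h1 : r < 1) (k : ℕ) :
    Summable fun l : PartK k => r ^ wtK k l := by
  induction k with
  | zero =>
    have : Subsingleton (PartK 0) := ⟨fun a b => Subtype.ext (funext fun i => by
      rw [a.2.2 i (Nat.zero_le _), b.2.2 i (Nat.zero_le _)])⟩
    have : Finite (PartK 0) := Finite.of_subsingleton
    exact Summable.of_finite
  | succ k ih =>
    have h := (summable_geometric_of_lt_one h0 h1).mul_of_nonneg ih
      (fun n => pow_nonneg h0 n) (fun l => pow_nonneg h0 _)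
    refine (h.comp_injective (rrSplit_inj k)).congr fun l => ?_
    simp only [Function.comp, rrSplit, rrShift, wtK]
    rw [← pow_add, Finset.sum_range_succ', add_comm]

/-- The summand, with `k = K + 1`. -/
noncomputable def rrF (q : ℂ) (K : ℕ) (l : PartK (K + 1)) : ℂ :=
  q ^ n2K (K + 1) l / (qPoch (-q) q (l.1 K) * pochK q q (K + 1) l)

lemma rrF_succ (q : ℂ) (K : ℕ) (l : PartK (K + 2)) :
    rrF q (K + 1) l = q ^ ((l.1 0) ^ 2) * rrU q (l.1 0 - l.1 1) * rrF q K (rrShift (K + 1) l) := by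
  simp only [rrF, rrU, n2K, pochK, rrShift]
  rw [Finset.sum_range_succ' _ (K + 1), Finset.prod_range_succ' _ (K + 1), pow_add]
  simp only [zero_add, div_eq_mul_inv, mul_inv]
  ring

lemma rrF_bound {q : ℂ} (hq : ‖q‖ < 1) (K : ℕ) :
    ∃ D : ℝ, 0 ≤ D ∧ ∀ l, ‖rrF q K l‖ ≤ D * ‖q‖ ^ wtK (K + 1) l := by
  have hq' : ‖-q‖ < 1 := by simpa using hq
  obtain ⟨C, hC0, hC⟩ := bdd_of_tendsto (rrU_tendsto hq)
  obtain ⟨E, hE0, hE⟩ := bdd_of_tendsto ((qPoch_tendsto (-q) hq).inv₀ (qPochInf_ne hq' hq))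
  refine ⟨E * C ^ (K + 1), by positivity, fun l => ?_⟩
  rw [rrF, div_eq_mul_inv, mul_inv, norm_mul, norm_mul, mul_comm]
  gcongr
  · exact hE _
  · rw [pochK, ← Finset.prod_inv_distrib, norm_prod]
    refine (Finset.prod_le_prod (fun i _ => norm_nonneg _) fun i _ => hC _).trans ?_
    simp
  · rw [norm_pow]
    refine pow_le_pow_of_le_one (norm_nonneg _) hq.le ?_
    exact Finset.sum_le_sum fun i _ => Nat.le_self_pow two_ne_zero _

lemma part_sum {q : ℂ} (hq : ‖q‖ < 1) (K : ℕ) : ∀ w : ℕ → ℂ, (∃ B : ℝ, ∀ n, ‖w n‖ ≤ B) →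
    ∑' l : PartK (K + 1), w (l.1 0) * rrF q K l
      = ∑' r : ℕ, w r * (q ^ (r ^ 2) * rrB q (K + 1) r) := by
  induction K with
  | zero =>
    intro w _
    let e : PartK 1 ≃ ℕ :=
      { toFun := fun l => l.1 0
        invFun := fun n => ⟨fun i => if i = 0 then n else 0, by
          apply antitone_nat_of_succ_le
          intro i; simp, by intro i hi; simp; omega⟩
        left_inv := by
          intro l
          apply Subtype.ext
          funext i
          rcases i with _ | i
          · simp
          · simp [l.2.2 (i + 1) (by omega)]
        right_inv := by intro n; simp }
    rw [← e.tsum_eq]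
    apply tsum_congr
    intro l
    have hl : l.1 1 = 0 := l.2.2 1 le_rfl
    have he : e l = l.1 0 := rfl
    rw [he]
    simp only [zero_add, rrB_one hq, rrF, n2K, pochK, Finset.sum_range_one,
      Finset.prod_range_one, hl, Nat.sub_zero, rrU, div_eq_mul_inv, mul_inv]
    ring
  | succ K ih =>
    rintro w ⟨B, hB⟩
    have hB0 : 0 ≤ B := (norm_nonneg _).trans (hB 0)
    obtain ⟨C, hC0, hC⟩ := bdd_of_tendsto (rrU_tendsto hq)
    obtain ⟨D, hD0, hD⟩ := rrF_bound hq K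
    let v : ℕ → ℕ → ℂ := fun L r => if r ∈ Finset.range (L + 1) then rrU q (L - r) else 0
    have hv : ∀ L r, ‖v L r‖ ≤ C := by
      intro L r
      simp only [v]
      split_ifs
      · exact hC _
      · simpa using hC0
    let F : ℕ × PartK (K + 1) → ℂ := fun x =>
      w x.1 * q ^ (x.1 ^ 2) * (v x.1 (x.2.1 0) * rrF q K x.2)
    have hF : Summable F := by
      have h := ((summable_geometric_of_lt_one (norm_nonneg q) hq).mul_of_nonneg
        (summable_wt (norm_nonneg q) hq (K + 1))
        (fun n => pow_nonneg (norm_nonneg _) n) (fun l => pow_nonneg (norm_nonneg _) _)).mul_left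
          (B * C * D)
      refine Summable.of_norm_bounded h ?_
      rintro ⟨L, m⟩
      simp only [F, norm_mul]
      have h2 : ‖q ^ (L ^ 2)‖ ≤ ‖q‖ ^ L := by
        rw [norm_pow]
        exact pow_sq_le (norm_nonneg _) hq L
      calc ‖w L‖ * ‖q ^ (L ^ 2)‖ * (‖v L (m.1 0)‖ * ‖rrF q K m‖)
          ≤ B * ‖q‖ ^ L * (C * (D * ‖q‖ ^ wtK (K + 1) m)) := by
            gcongr
            · exact hB L
            · exact hv _ _
            · exact hD m
        _ = _ := by ring
    have e1 : ∑' l : PartK (K + 2), w (l.1 0) * rrF q (K + 1) l = ∑' x, F x := by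
      rw [← (rrSplit_inj (K + 1)).tsum_eq (f := F)]
      · apply tsum_congr
        intro l
        have hle : l.1 1 ≤ l.1 0 := l.2.1 (Nat.zero_le 1)
        have hv1 : v (l.1 0) (l.1 1) = rrU q (l.1 0 - l.1 1) := by
          simp only [v]
          rw [if_pos (by simp; omega)]
        rw [rrF_succ]
        simp only [F, rrSplit]
        have : (rrShift (K + 1) l).1 0 = l.1 1 := rfl
        rw [this, hv1]
        ring
      · rintro ⟨L, m⟩ hx
        apply rrSplit_range
        by_contra hlt
        apply hx
        simp only [F, v]
        rw [if_neg (by simp; omega)]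
        simp
    rw [e1, hF.tsum_prod]
    apply tsum_congr
    intro L
    simp only [F]
    rw [tsum_mul_left, ih (v L) ⟨C, hv L⟩, ← bailey_step hq,
      tsum_eq_sum (s := Finset.range (L + 1)) (by intro b hb; simp only [v, hb, if_false, zero_mul]),
      ← mul_assoc]
    congr 1
    apply Finset.sum_congr rfl
    intro r hr
    simp only [v, hr, if_true]
    ring

/-- Identity (19): for `k ≥ 1`, `|q| < 1`,
`Σ_{l(λ)≤k} q^{n_2(λ)} / ((-q;q)_{λ_k} (q;q)_λ)
  = (q^{2k+2},q^{k+1},q^{k+1};q^{2k+2})_∞ / (q;q)_∞`. -/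
theorem rr_type_19 (k : ℕ) (hk : 1 ≤ k) (q : ℂ) (hq : ‖q‖ < 1) :
    ∑' lam : PartK k,
        q ^ n2K k lam / (qPoch (-q) q (lam.1 (k - 1)) * pochK q q k lam)
      = qPochInf (q ^ (2 * k + 2)) (q ^ (2 * k + 2)) *
          qPochInf (q ^ (k + 1)) (q ^ (2 * k + 2)) *
          qPochInf (q ^ (k + 1)) (q ^ (2 * k + 2)) / qPochInf q q := by
  obtain ⟨K, rfl⟩ : ∃ K, k = K + 1 := ⟨k - 1, by omega⟩
  have h := part_sum hq K (fun _ => 1) ⟨1, by simp⟩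
  simp only [one_mul] at h
  rw [bailey_lim hq (K + 1) (by omega), theta_eq (by
    rw [norm_pow]; exact pow_lt_one₀ (norm_nonneg _) hq (by omega)), ← pow_mul,
    show (K + 1 + 1) * 2 = 2 * (K + 1) + 2 by ring] at h
  exact h
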